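/- Let n ≥ 2 be an integer and let η be the admissible reactive profile. Then z^δ η(z) → λ as z → ∞, where δ = (n+2)/(n−1) and λ = (δ(δ+1)/(2κ)^n)^{1/(n−1)}; moreover there exists a constant λ_∞ ∈ ℝ such that z^{δ'} (η(z) − λ z^{−δ}) → λ_∞ as z → ∞, where δ' = (√(4nδ(δ+1)+1) − 1)/2 if 2 ≤ n ≤ 5 and δ' = 2δ + 1 if n ≥ 6. -/

import Mathlib

noncomputable def kap : ℝ := 1 / Real.sqrt Real.pi

noncomputable def del (n : ℕ) : ℝ := ((n : ℝ) + 2) / ((n : ℝ) - 1)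

noncomputable def lam (n : ℕ) : ℝ :=
  (del n * (del n + 1) / (2 * kap) ^ n) ^ (1 / ((n : ℝ) - 1))

noncomputable def delp (n : ℕ) : ℝ :=
  if n ≤ 5 then (Real.sqrt (4 * (n : ℝ) * del n * (del n + 1) + 1) - 1) / 2
  else 2 * del n + 1

def IsReactiveProfile (n : ℕ) (η : ℝ → ℝ) : Prop :=
  ContDiffOn ℝ 2 η (Set.Ici 0) ∧
  (∀ z ∈ Set.Ici (0:ℝ), 0 < η z) ∧
  (∀ z ∈ Set.Ici (0:ℝ),
    derivWithin (derivWithin η (Set.Ici 0)) (Set.Ici 0) z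
      = (2 * kap * z * η z + (η z) ^ 2) ^ n) ∧
  derivWithin η (Set.Ici 0) 0 = -kap ∧
  Filter.Tendsto η Filter.atTop (nhds 0)

/-!
By the maximum principle, if `f → 0` and `z ^ 2 * f'' ≥ p * (p + 1) * f` near infinity, then
`f` stays below a homogeneous solution `C * z ^ (-p)` once it meets it, so `z ^ p * f` is eventually
decreasing. Applied to `±f + m * z ^ (-a)`, this turns a bound `O(z ^ (-a))` on the forcing
`z ^ 2 * f'' - p * (p + 1) * f` into the same bound on `f` when `a < p`, and into convergence of
`z ^ p * f` when `p < a`.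

The power law `w = λ z ^ (-δ)` solves `w'' = (2 κ z w) ^ n`, and suitable translates of it are a
super- and a subsolution of the profile equation, so `η - w = O(z ^ (-(δ + 1)))`. The difference
satisfies an Euler equation of the above kind with `p * (p + 1) = n * δ * (δ + 1)`, whose forcing
is a multiple of `z ^ (-(2 * δ + 1))` up to `O(z ^ (-(δ + 2 * q)))` if
`η - w = O(z ^ (-(δ + q)))`. Starting from `q = 1`, one improvement to `q = 3 / 2` suffices: for
`n ≤ 5` the exponent `p` is below `2 * δ + 1` and `δ + 3`, and the homogeneous solution dominates,
while for `n ≥ 6` the explicit forcing term does.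
-/

open Filter Topology Set Asymptotics

section MaximumPrinciple

variable {f f' f'' g g' g'' : ℝ → ℝ} {Z : ℝ}

theorem second_deriv_nonpos_of_isLocalMax {x f₂ : ℝ} (hmax : IsLocalMax f x)
    (hf : ∀ᶠ y in 𝓝 x, HasDerivAt f (f' y) y) (hf' : HasDerivAt f' f₂ x) : f₂ ≤ 0 := by
  by_contra! hpos
  have hderiv : deriv f =ᶠ[𝓝 x] f' := hf.mono fun y hy => hy.deriv
  have hderiv2 : deriv (deriv f) x = f₂ := by rw [hderiv.deriv_eq, hf'.deriv]
  have hmin : IsLocalMin f x :=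
    isLocalMin_of_deriv_deriv_pos (hderiv2 ▸ hpos) hmax.deriv_eq_zero
      hf.self_of_nhds.continuousAt
  have hconst : f =ᶠ[𝓝 x] fun _ => f x := by
    filter_upwards [hmax, hmin] with y hle hge using le_antisymm hle hge
  have hzero : deriv (deriv f) x = 0 := by
    rw [hconst.deriv.deriv_eq]
    simp only [deriv_const']
  exact hpos.ne' (hderiv2.symm.trans hzero)

theorem nonpos_on_Ici_of_second_deriv_pos (hcont : ContinuousOn f (Ici Z))
    (hf : ∀ z > Z, HasDerivAt f (f' z) z) (hf' : ∀ z > Z, HasDerivAt f' (f'' z) z)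
    (hlim : Tendsto f atTop (𝓝 0)) (hZ : f Z ≤ 0) (hpos : ∀ z > Z, 0 < f z → 0 < f'' z) :
    ∀ z ≥ Z, f z ≤ 0 := by
  intro x hx
  by_contra! hfx
  obtain ⟨N, hfN, hxN⟩ :=
    ((hlim.eventually_lt_const hfx).and (eventually_gt_atTop x)).exists
  obtain ⟨m, hm, hmax⟩ := isCompact_Icc.exists_isMaxOn (s := Icc Z N)
    ⟨x, hx, hxN.le⟩ (hcont.mono Icc_subset_Ici_self)
  have hfm : f x ≤ f m := hmax ⟨hx, hxN.le⟩
  have hZm : Z < m := hm.1.lt_of_ne (by rintro rfl; linarith)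
  have hmN : m < N := hm.2.lt_of_ne (by rintro rfl; linarith)
  refine (hpos m hZm (hfx.trans_le hfm)).not_ge ?_
  exact second_deriv_nonpos_of_isLocalMax (hmax.isLocalMax (Icc_mem_nhds hZm hmN))
    ((eventually_gt_nhds hZm).mono hf) (hf' m hZm)

theorem le_on_Ici_of_second_deriv_lt (hfc : ContinuousOn f (Ici Z)) (hgc : ContinuousOn g (Ici Z))
    (hf : ∀ z > Z, HasDerivAt f (f' z) z) (hf' : ∀ z > Z, HasDerivAt f' (f'' z) z)
    (hg : ∀ z > Z, HasDerivAt g (g' z) z) (hg' : ∀ z > Z, HasDerivAt g' (g'' z) z)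
    (hf0 : Tendsto f atTop (𝓝 0)) (hg0 : Tendsto g atTop (𝓝 0)) (hZ : f Z ≤ g Z)
    (hlt : ∀ z > Z, g z < f z → g'' z < f'' z) : ∀ z ≥ Z, f z ≤ g z := by
  intro z hz
  refine sub_nonpos.1 (nonpos_on_Ici_of_second_deriv_pos (f := f - g) (hfc.sub hgc)
    (fun y hy => (hf y hy).sub (hg y hy)) (fun y hy => (hf' y hy).sub (hg' y hy))
    (by simpa using! hf0.sub hg0) (sub_nonpos.2 hZ) (fun y hy h => ?_) z hz)
  exact sub_pos.2 (hlt y hy (sub_pos.1 h))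

end MaximumPrinciple

/-- `f` tends to `0` at infinity, and `f'`, `f''` are its first two derivatives near infinity. -/
structure VanishesWithDerivs (f f' f'' : ℝ → ℝ) : Prop where
  hasDerivAt : ∀ᶠ z in atTop, HasDerivAt f (f' z) z
  hasDerivAt_deriv : ∀ᶠ z in atTop, HasDerivAt f' (f'' z) z
  tendsto_zero : Tendsto f atTop (𝓝 0)

namespace VanishesWithDerivs

variable {f f' f'' g g' g'' : ℝ → ℝ}

theorem neg (hf : VanishesWithDerivs f f' f'') : VanishesWithDerivs (-f) (-f') (-f'') where
  hasDerivAt := hf.hasDerivAt.mono fun _ h => h.neg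
  hasDerivAt_deriv := hf.hasDerivAt_deriv.mono fun _ h => h.neg
  tendsto_zero := by simpa using! hf.tendsto_zero.neg

theorem add (hf : VanishesWithDerivs f f' f'') (hg : VanishesWithDerivs g g' g'') :
    VanishesWithDerivs (f + g) (f' + g') (f'' + g'') where
  hasDerivAt := (hf.hasDerivAt.and hg.hasDerivAt).mono fun _ h => h.1.add h.2
  hasDerivAt_deriv := (hf.hasDerivAt_deriv.and hg.hasDerivAt_deriv).mono fun _ h => h.1.add h.2
  tendsto_zero := by simpa using! hf.tendsto_zero.add hg.tendsto_zero

theorem sub (hf : VanishesWithDerivs f f' f'') (hg : VanishesWithDerivs g g' g'') :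
    VanishesWithDerivs (f - g) (f' - g') (f'' - g'') := by
  simpa only [sub_eq_add_neg] using hf.add hg.neg

end VanishesWithDerivs

section PowerFunctions

variable {a b C z : ℝ}

theorem hasDerivAt_const_mul_rpow_neg (C a : ℝ) (hz : 0 < z) :
    HasDerivAt (fun y : ℝ => C * y ^ (-a)) (-(C * a) * z ^ (-a - 1)) z :=
  ((Real.hasDerivAt_rpow_const (.inl hz.ne')).const_mul C).congr_deriv (by ring)

theorem hasDerivAt_const_mul_rpow_neg_deriv (C a : ℝ) (hz : 0 < z) :
    HasDerivAt (fun y : ℝ => -(C * a) * y ^ (-a - 1))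
      (a * (a + 1) * (C * z ^ (-a)) / z ^ 2) z := by
  have hpow : z ^ (-a - 1 - 1) = z ^ (-a) / z ^ 2 := by
    rw [Real.rpow_sub_one hz.ne', Real.rpow_sub_one hz.ne', div_div, ← sq]
  refine ((Real.hasDerivAt_rpow_const (.inl hz.ne')).const_mul (-(C * a))).congr_deriv ?_
  rw [hpow]
  ring

theorem tendsto_const_mul_rpow_neg (C : ℝ) (ha : 0 < a) :
    Tendsto (fun z : ℝ => C * z ^ (-a)) atTop (𝓝 0) := by
  simpa only [mul_zero] using (tendsto_rpow_neg_atTop ha).const_mul C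

theorem vanishesWithDerivs_const_mul_rpow_neg (C : ℝ) (ha : 0 < a) :
    VanishesWithDerivs (fun z => C * z ^ (-a)) (fun z => -(C * a) * z ^ (-a - 1))
      (fun z => a * (a + 1) * (C * z ^ (-a)) / z ^ 2) where
  hasDerivAt := (eventually_gt_atTop 0).mono fun _ => hasDerivAt_const_mul_rpow_neg C a
  hasDerivAt_deriv := (eventually_gt_atTop 0).mono fun _ => hasDerivAt_const_mul_rpow_neg_deriv C a
  tendsto_zero := tendsto_const_mul_rpow_neg C ha

theorem isBigO_rpow_atTop_of_le (hab : a ≤ b) :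
    (fun z : ℝ => z ^ a) =O[atTop] fun z : ℝ => z ^ b := by
  refine .of_norm_eventuallyLE ?_
  filter_upwards [eventually_ge_atTop 1] with z hz
  rw [Real.norm_of_nonneg (by positivity)]
  exact Real.rpow_le_rpow_of_exponent_le hz hab

theorem isBigO_rpow_neg_of_sub_isBigO {f : ℝ → ℝ} {d : ℝ} (hab : a ≤ b) (had : a ≤ d)
    (hf : (fun z => f z - C * z ^ (-b)) =O[atTop] fun z => z ^ (-d)) :
    f =O[atTop] fun z => z ^ (-a) := by
  have hpow := (isBigO_rpow_atTop_of_le (neg_le_neg hab)).const_mul_left C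
  simpa using! (hf.trans (isBigO_rpow_atTop_of_le (neg_le_neg had))).add hpow

theorem tendsto_rpow_mul_of_isBigO {f : ℝ → ℝ} (hab : b < a)
    (hf : (fun z => f z - C * z ^ (-b)) =O[atTop] fun z => z ^ (-a)) :
    Tendsto (fun z => z ^ b * f z) atTop (𝓝 C) := by
  have hdiff : Tendsto (fun z : ℝ => z ^ b * (f z - C * z ^ (-b))) atTop (𝓝 0) :=
    ((isBigO_refl (fun z : ℝ => z ^ b) atTop).mul_atTop_rpow_of_isBigO_rpow b (-a) (-(a - b)) hf
      (by linarith)).trans_tendsto (tendsto_rpow_neg_atTop (sub_pos.2 hab))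
  refine tendsto_sub_nhds_zero_iff.1 (hdiff.congr' ?_)
  filter_upwards [eventually_gt_atTop 0] with z hz
  have hinv : z ^ b * z ^ (-b) = 1 := by rw [← Real.rpow_add hz, add_neg_cancel, Real.rpow_zero]
  linear_combination -C * hinv

theorem isBigO_rpow_neg_add_const_sub (a s : ℝ) :
    (fun z : ℝ => (z + s) ^ (-a) - z ^ (-a)) =O[atTop] fun z => z ^ (-(a + 1)) := by
  have hderiv : HasDerivAt (fun x : ℝ => (1 + x) ^ (-a)) (-a) 0 := by
    simpa using ((hasDerivAt_id (0 : ℝ)).const_add 1).rpow_const (p := -a) (by simp)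
  have hs : (fun z : ℝ => s / z) =O[atTop] fun z => z ^ (-1 : ℝ) := by
    simpa only [Real.rpow_neg_one, div_eq_mul_inv] using
      (isBigO_refl (fun z : ℝ => z⁻¹) atTop).const_mul_left s
  have hrel : (fun z : ℝ => (1 + s / z) ^ (-a) - 1) =O[atTop] fun z => z ^ (-1 : ℝ) := by
    have hcomp := hderiv.isBigO_sub.comp_tendsto (tendsto_id.const_div_atTop s)
    simp only [Function.comp_def, id, add_zero, Real.one_rpow, sub_zero] at hcomp
    exact hcomp.trans hs
  refine ((isBigO_refl (fun z : ℝ => z ^ (-a)) atTop).mul_atTop_rpow_of_isBigO_rpow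
    (-a) (-1) (-(a + 1)) hrel (by linarith)).congr' ?_ .rfl
  filter_upwards [eventually_gt_atTop 0, eventually_gt_atTop (-s)] with z hz hzs
  have hfactor : z + s = z * (1 + s / z) := by field_simp
  have hpos : 0 ≤ 1 + s / z := by
    rw [one_add_div hz.ne']
    exact div_nonneg (by linarith) hz.le
  rw [Pi.mul_apply, hfactor, Real.mul_rpow hz.le hpos]
  ring

theorem isBigO_one_add_pow_sub_linear (n : ℕ) :
    (fun x : ℝ => (1 + x) ^ n - 1 - n * x) =O[𝓝 0] fun x => x ^ 2 := by
  induction n with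
  | zero => simpa using isBigO_zero _ _
  | succ k ih =>
    have hbdd : (fun x : ℝ => 1 + x) =O[𝓝 0] fun _ => (1 : ℝ) :=
      (continuous_const.add continuous_id).continuousAt.isBigO_one ℝ
    have hsq := (isBigO_refl (fun x : ℝ => 1 * x ^ 2) (𝓝 0)).const_mul_left (k : ℝ)
    refine ((hbdd.mul ih).add hsq).congr (fun x => ?_) fun x => one_mul _
    push_cast
    ring

theorem isBigO_one_add_pow_sub_linear_add {α : Type*} {l : Filter α} {r e g : α → ℝ} (n : ℕ)
    (hr : r =O[l] g) (he : e =O[l] g) (hg : Tendsto g l (𝓝 0)) :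
    (fun x => (1 + (r x + e x * (1 + r x) ^ 2)) ^ n - 1 - n * (r x + e x)) =O[l]
      fun x => g x ^ 2 := by
  have hbdd {φ : ℝ → ℝ} (hφ : Continuous φ) : (fun x => φ (r x)) =O[l] fun _ => (1 : ℝ) :=
    ((hφ.tendsto 0).comp (hr.trans_tendsto hg)).isBigO_one ℝ
  set X : α → ℝ := fun x => r x + e x * (1 + r x) ^ 2
  have hX : X =O[l] g := by
    refine hr.add ?_
    simpa only [mul_one] using he.mul (hbdd (φ := fun y => (1 + y) ^ 2) (by fun_prop))
  have htaylor : (fun x => (1 + X x) ^ n - 1 - n * X x) =O[l] fun x => g x ^ 2 :=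
    ((isBigO_one_add_pow_sub_linear n).comp_tendsto (hX.trans_tendsto hg)).trans (hX.pow 2)
  have hcross : (fun x => e x * r x * (2 + r x)) =O[l] fun x => g x ^ 2 := by
    simpa only [mul_one, sq] using (he.mul hr).mul (hbdd (φ := fun y => 2 + y) (by fun_prop))
  refine (htaylor.add (hcross.const_mul_left (n : ℝ))).congr_left fun x => ?_
  ring

end PowerFunctions

namespace VanishesWithDerivs

variable {f f' f'' : ℝ → ℝ} {a b p A : ℝ}

theorem exists_antitoneOn_rpow_mul (hf : VanishesWithDerivs f f' f'') (hp : 0 < p)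
    (hsub : ∀ᶠ z in atTop, p * (p + 1) * f z ≤ z ^ 2 * f'' z) :
    ∃ Z, AntitoneOn (fun z => z ^ p * f z) (Ici Z) := by
  obtain ⟨Z, hZ⟩ := eventually_atTop.1 ((eventually_gt_atTop 0).and
    (hf.hasDerivAt.and (hf.hasDerivAt_deriv.and hsub)))
  refine ⟨Z, fun y hy z _ hyz => ?_⟩
  have hpos : ∀ x ≥ y, 0 < x := fun x hx => (hZ x (hy.trans hx)).1
  have hcancel : ∀ x ≥ y, x ^ p * x ^ (-p) = 1 := fun x hx => by
    rw [← Real.rpow_add (hpos x hx), add_neg_cancel, Real.rpow_zero]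
  set C := y ^ p * f y
  have hle : f z ≤ C * z ^ (-p) := by
    refine le_on_Ici_of_second_deriv_lt
      (HasDerivAt.continuousOn fun x hx => (hZ x (hy.trans hx)).2.1)
      (HasDerivAt.continuousOn fun x hx => hasDerivAt_const_mul_rpow_neg C p (hpos x hx))
      (fun x hx => (hZ x (hy.trans hx.le)).2.1) (fun x hx => (hZ x (hy.trans hx.le)).2.2.1)
      (fun x hx => hasDerivAt_const_mul_rpow_neg C p (hpos x hx.le))
      (fun x hx => hasDerivAt_const_mul_rpow_neg_deriv C p (hpos x hx.le))
      hf.tendsto_zero (tendsto_const_mul_rpow_neg C hp) ?_ (fun x hx hlt => ?_) z hyz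
    · linear_combination -(f y) * hcancel y le_rfl
    · rw [div_lt_iff₀' (pow_pos (hpos x hx.le) 2)]
      exact (mul_lt_mul_of_pos_left hlt (by positivity)).trans_le (hZ x (hy.trans hx.le)).2.2.2
  calc z ^ p * f z ≤ z ^ p * (C * z ^ (-p)) :=
        mul_le_mul_of_nonneg_left hle (Real.rpow_nonneg (hpos z hyz).le p)
    _ = C := by linear_combination C * hcancel z hyz

theorem exists_antitoneOn_rpow_mul_add (hf : VanishesWithDerivs f f' f'') (hp : 0 < p)
    (ha : 0 < a) (m : ℝ)
    (hsub : ∀ᶠ z in atTop,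
      p * (p + 1) * f z - m * (a * (a + 1) - p * (p + 1)) * z ^ (-a) ≤ z ^ 2 * f'' z) :
    ∃ Z, AntitoneOn (fun z => z ^ p * f z + m * z ^ (p - a)) (Ici Z) := by
  obtain ⟨Z, hZ⟩ := (hf.add (vanishesWithDerivs_const_mul_rpow_neg m ha)).exists_antitoneOn_rpow_mul
    hp (by
      filter_upwards [hsub, eventually_gt_atTop 0] with z hz hz0
      simp only [Pi.add_apply, mul_add, mul_div_cancel₀ _ (pow_pos hz0 2).ne']
      linarith)
  refine ⟨max Z 1, (hZ.mono (Ici_subset_Ici.2 (le_max_left Z 1))).congr fun z hz => ?_⟩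
  have hz0 : 0 < z := one_pos.trans_le ((le_max_right Z 1).trans hz)
  simp only [Pi.add_apply]
  rw [sub_eq_add_neg, Real.rpow_add hz0]
  ring

theorem exists_abs_rpow_mul_sub_le (hf : VanishesWithDerivs f f' f'') (hp : 0 < p)
    (ha : 0 < a) (hap : a ≠ p)
    (hforce : (fun z => z ^ 2 * f'' z - p * (p + 1) * f z) =O[atTop] fun z => z ^ (-a)) :
    ∃ m, ∀ᶠ Z in atTop, ∀ z ≥ Z,
      |z ^ p * f z - Z ^ p * f Z| ≤ m * Z ^ (p - a) - m * z ^ (p - a) := by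
  obtain ⟨K, hK⟩ := hforce.bound
  have hgap : a * (a + 1) - p * (p + 1) ≠ 0 := by
    rw [show a * (a + 1) - p * (p + 1) = (a - p) * (a + p + 1) by ring]
    exact mul_ne_zero (sub_ne_zero.2 hap) (by positivity)
  set m := K / (a * (a + 1) - p * (p + 1))
  have hmK : m * (a * (a + 1) - p * (p + 1)) = K := div_mul_cancel₀ K hgap
  have hbound : ∀ᶠ z in atTop, |z ^ 2 * f'' z - p * (p + 1) * f z| ≤ K * z ^ (-a) := by
    filter_upwards [hK, eventually_ge_atTop 0] with z hz hz0
    rwa [Real.norm_eq_abs, Real.norm_of_nonneg (Real.rpow_nonneg hz0 _)] at hz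
  obtain ⟨Z₁, hup⟩ := hf.exists_antitoneOn_rpow_mul_add hp ha m
    (hbound.mono fun z hz => by rw [hmK]; linarith [(abs_le.1 hz).1])
  obtain ⟨Z₂, hdown⟩ := hf.neg.exists_antitoneOn_rpow_mul_add hp ha m
    (hbound.mono fun z hz => by
      rw [hmK, Pi.neg_apply, Pi.neg_apply]
      linarith [(abs_le.1 hz).2])
  refine ⟨m, ?_⟩
  filter_upwards [eventually_ge_atTop Z₁, eventually_ge_atTop Z₂] with Z hZ₁ hZ₂ z hz
  have hle := hup hZ₁ (hZ₁.trans hz) hz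
  have hge := hdown hZ₂ (hZ₂.trans hz) hz
  simp only [Pi.neg_apply] at hle hge
  rw [abs_le]
  constructor <;> linarith

theorem isBigO_of_euler_isBigO (hf : VanishesWithDerivs f f' f'') (ha : 0 < a) (hap : a < p)
    (hforce : (fun z => z ^ 2 * f'' z - p * (p + 1) * f z) =O[atTop] fun z => z ^ (-a)) :
    f =O[atTop] fun z => z ^ (-a) := by
  obtain ⟨m, hm⟩ := hf.exists_abs_rpow_mul_sub_le (ha.trans hap) ha hap.ne hforce
  obtain ⟨Z, hZ⟩ := hm.exists
  have hconst (c : ℝ) : (fun _ : ℝ => c) =O[atTop] fun z : ℝ => z ^ (p - a) :=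
    (isLittleO_const_left.2 (.inr (tendsto_norm_atTop_atTop.comp
      (tendsto_rpow_atTop (sub_pos.2 hap))))).isBigO
  have hdiff : (fun z => z ^ p * f z - Z ^ p * f Z) =O[atTop] fun z => z ^ (p - a) :=
    (IsBigO.of_norm_eventuallyLE ((eventually_ge_atTop Z).mono hZ)).trans
      ((hconst _).sub ((isBigO_refl _ _).const_mul_left m))
  have hscaled : (fun z => z ^ p * f z) =O[atTop] fun z => z ^ (p - a) := by
    simpa only [sub_add_cancel] using hdiff.add (hconst (Z ^ p * f Z))
  refine ((isBigO_refl (fun z : ℝ => z ^ (-p)) atTop).mul_atTop_rpow_of_isBigO_rpow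
    (-p) (p - a) (-a) hscaled (by linarith)).congr' ?_ .rfl
  filter_upwards [eventually_gt_atTop 0] with z hz
  rw [Pi.mul_apply, ← mul_assoc, ← Real.rpow_add hz, neg_add_cancel, Real.rpow_zero, one_mul]

theorem exists_tendsto_rpow_mul_of_euler_isBigO (hf : VanishesWithDerivs f f' f'') (hp : 0 < p)
    (hpa : p < a)
    (hforce : (fun z => z ^ 2 * f'' z - p * (p + 1) * f z) =O[atTop] fun z => z ^ (-a)) :
    ∃ l, Tendsto (fun z => z ^ p * f z) atTop (𝓝 l) := by
  obtain ⟨m, hm⟩ := hf.exists_abs_rpow_mul_sub_le hp (hp.trans hpa) hpa.ne' hforce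
  have hzero : Tendsto (fun z : ℝ => m * z ^ (p - a)) atTop (𝓝 0) := by
    simpa only [neg_sub] using tendsto_const_mul_rpow_neg m (sub_pos.2 hpa)
  refine cauchySeq_tendsto_of_complete (Metric.cauchySeq_iff'.2 fun ε hε => ?_)
  obtain ⟨N, hN⟩ := Metric.cauchySeq_iff.1 hzero.cauchySeq ε hε
  obtain ⟨Z, hZ, hNZ⟩ := (hm.and (eventually_ge_atTop N)).exists
  refine ⟨Z, fun z hz => (hZ z hz).trans_lt ?_⟩
  exact (le_abs_self _).trans_lt (hN Z hNZ z (hNZ.trans hz))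

theorem tendsto_rpow_mul_of_euler_sub_isBigO (hf : VanishesWithDerivs f f' f'') (hb : 0 < b)
    (hbp : b < p) (hba : b < a)
    (hforce : (fun z => z ^ 2 * f'' z - p * (p + 1) * f z - A * z ^ (-b)) =O[atTop]
      fun z => z ^ (-a)) :
    Tendsto (fun z => z ^ b * f z) atTop (𝓝 (A / (b * (b + 1) - p * (p + 1)))) := by
  set B := A / (b * (b + 1) - p * (p + 1))
  have hBA : B * (b * (b + 1) - p * (p + 1)) = A :=
    div_mul_cancel₀ A (sub_neg.2 (by gcongr)).ne
  obtain ⟨d, hbd, hd⟩ := exists_between (lt_min hbp hba)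
  refine tendsto_rpow_mul_of_isBigO hbd ?_
  refine (hf.sub (vanishesWithDerivs_const_mul_rpow_neg B hb)).isBigO_of_euler_isBigO
    (hb.trans hbd) (hd.trans_le (min_le_left p a)) ?_
  refine (hforce.congr' ?_ .rfl).trans
    (isBigO_rpow_atTop_of_le (neg_le_neg (hd.le.trans (min_le_right p a))))
  filter_upwards [eventually_gt_atTop 0] with z hz
  simp only [Pi.sub_apply, mul_sub, mul_div_cancel₀ _ (pow_pos hz 2).ne']
  linear_combination z ^ (-b) * hBA

end VanishesWithDerivs

section PowerSolution

variable {n : ℕ} {c z : ℝ}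

theorem natCast_mul_del (hn : 2 ≤ n) : (n : ℝ) * del n = n + 2 + del n := by
  have hn' : (2 : ℝ) ≤ n := by exact_mod_cast hn
  have hsub : (n : ℝ) - 1 ≠ 0 := by linarith
  unfold del
  field_simp
  ring

theorem one_lt_del (hn : 2 ≤ n) : 1 < del n := by
  have hn' : (2 : ℝ) ≤ n := by exact_mod_cast hn
  rw [del, lt_div_iff₀ (by linarith)]
  linarith

/-- The amplitude of `powerSolution n c`; `lam n` is the case `c = 2 * kap`. -/
noncomputable def powerAmplitude (n : ℕ) (c : ℝ) : ℝ :=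
  (del n * (del n + 1) / c ^ n) ^ (1 / ((n : ℝ) - 1))

/-- The decaying power law that solves `w'' = (c z w) ^ n`, the reactive profile equation without
its quadratic term. -/
noncomputable def powerSolution (n : ℕ) (c z : ℝ) : ℝ :=
  powerAmplitude n c * z ^ (-del n)

theorem powerAmplitude_pos (hn : 2 ≤ n) (hc : 0 < c) : 0 < powerAmplitude n c := by
  have hδ := one_lt_del hn
  unfold powerAmplitude
  positivity

theorem powerSolution_pos (hn : 2 ≤ n) (hc : 0 < c) (hz : 0 < z) : 0 < powerSolution n c z :=
  mul_pos (powerAmplitude_pos hn hc) (Real.rpow_pos_of_pos hz _)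

theorem mul_powerAmplitude_pow (hn : 2 ≤ n) (hc : 0 < c) :
    (c * powerAmplitude n c) ^ n = del n * (del n + 1) * powerAmplitude n c := by
  have hδ := one_lt_del hn
  obtain ⟨m, rfl⟩ : ∃ m, n = m + 1 := ⟨n - 1, by lia⟩
  have hm : m ≠ 0 := by lia
  have hpow : powerAmplitude (m + 1) c ^ m =
      del (m + 1) * (del (m + 1) + 1) / c ^ (m + 1) := by
    rw [powerAmplitude, Nat.cast_add_one, add_sub_cancel_right, one_div,
      Real.rpow_inv_natCast_pow (by positivity) hm]
  rw [mul_pow, pow_succ (powerAmplitude _ _), hpow]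
  field_simp

theorem mul_powerSolution_pow (hn : 2 ≤ n) (hc : 0 < c) (hz : 0 < z) :
    (c * z * powerSolution n c z) ^ n = del n * (del n + 1) * powerSolution n c z / z ^ 2 := by
  have hpow : (z * z ^ (-del n)) ^ n = z ^ (-del n) / z ^ 2 := by
    rw [← Real.rpow_sub_natCast hz.ne', ← Real.rpow_one_add' hz.le (by linarith [one_lt_del hn]),
      ← Real.rpow_mul_natCast hz.le]
    congr 1
    push_cast
    linarith [natCast_mul_del hn]
  calc (c * z * powerSolution n c z) ^ n
      = (c * powerAmplitude n c) ^ n * (z * z ^ (-del n)) ^ n := by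
        rw [powerSolution, ← mul_pow]
        ring
    _ = del n * (del n + 1) * powerSolution n c z / z ^ 2 := by
        rw [hpow, mul_powerAmplitude_pow hn hc, powerSolution]
        ring

theorem hasDerivAt_powerSolution_deriv (hn : 2 ≤ n) (hc : 0 < c) (hz : 0 < z) :
    HasDerivAt (fun y => -(powerAmplitude n c * del n) * y ^ (-del n - 1))
      ((c * z * powerSolution n c z) ^ n) z := by
  rw [mul_powerSolution_pow hn hc hz]
  exact hasDerivAt_const_mul_rpow_neg_deriv _ _ hz

theorem tendsto_powerSolution_add_const (hn : 2 ≤ n) (c s : ℝ) :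
    Tendsto (fun z => powerSolution n c (z + s)) atTop (𝓝 0) :=
  (tendsto_const_mul_rpow_neg _ (one_pos.trans (one_lt_del hn))).comp
    (tendsto_atTop_add_const_right _ s tendsto_id)

theorem isBigO_powerSolution_add_const_sub (n : ℕ) (c s : ℝ) :
    (fun z => powerSolution n c (z + s) - powerSolution n c z) =O[atTop]
      fun z => z ^ (-(del n + 1)) := by
  simpa only [powerSolution, mul_sub] using
    (isBigO_rpow_neg_add_const_sub (del n) s).const_mul_left (powerAmplitude n c)

end PowerSolution

/-- A positive solution of the reactive profile equation `η'' = (c z η + η ^ 2) ^ n` near infinity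
which tends to `0`; `η'` is its derivative. -/
structure IsReactiveTail (n : ℕ) (c : ℝ) (η η' : ℝ → ℝ) : Prop where
  pos : ∀ᶠ z in atTop, 0 < η z
  vanishesWithDerivs : VanishesWithDerivs η η' fun z => (c * z * η z + η z ^ 2) ^ n

theorem IsReactiveProfile.isReactiveTail {n : ℕ} {η : ℝ → ℝ} (h : IsReactiveProfile n η) :
    IsReactiveTail n (2 * kap) η (derivWithin η (Ici 0)) := by
  obtain ⟨hsmooth, hpos, hode, -, hlim⟩ := h
  have hsmooth' : ContDiffOn ℝ 1 (derivWithin η (Ici 0)) (Ici 0) :=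
    hsmooth.derivWithin (uniqueDiffOn_Ici 0) (by norm_num)
  refine ⟨(eventually_ge_atTop 0).mono hpos, ?_, ?_, hlim⟩
  · filter_upwards [eventually_gt_atTop 0] with z hz
    exact (hsmooth.differentiableOn (by norm_num) z hz.le).hasDerivWithinAt.hasDerivAt
      (Ici_mem_nhds hz)
  · filter_upwards [eventually_gt_atTop 0] with z hz
    rw [← hode z hz.le]
    exact (hsmooth'.differentiableOn (by norm_num) z hz.le).hasDerivWithinAt.hasDerivAt
      (Ici_mem_nhds hz)

namespace IsReactiveTail

variable {n : ℕ} {c : ℝ} {η η' : ℝ → ℝ}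

theorem exists_le_powerSolution (h : IsReactiveTail n c η η') (hn : 2 ≤ n) (hc : 0 < c) :
    ∃ s, ∀ᶠ z in atTop, η z ≤ powerSolution n c (z + s) := by
  obtain ⟨Z, hZ⟩ := eventually_atTop.1 ((eventually_ge_atTop 0).and (h.pos.and
    (h.vanishesWithDerivs.hasDerivAt.and h.vanishesWithDerivs.hasDerivAt_deriv)))
  -- The barrier blows up at `Z`, so it starts above `η`.
  have hblowup : Tendsto (fun y => powerSolution n c (y + -Z)) (𝓝[>] Z) atTop :=
    ((tendsto_rpow_neg_nhdsGT_zero (by linarith [one_lt_del hn])).const_mul_atTop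
      (powerAmplitude_pos hn hc)).comp (tendsto_nhdsWithin_iff.2
        ⟨tendsto_nhdsWithin_of_tendsto_nhds (by
          simpa only [add_neg_cancel] using! (continuous_add_const (-Z)).tendsto Z),
        eventually_nhdsWithin_of_forall fun y hy => by simpa using! hy⟩)
  have hbdd : ∀ᶠ y in 𝓝[>] Z, η y < η Z + 1 :=
    ((hZ Z le_rfl).2.2.1.continuousAt.eventually_lt_const (lt_add_one _)).filter_mono
      nhdsWithin_le_nhds
  obtain ⟨y, hy, hηy, hZy⟩ := ((hblowup.eventually_ge_atTop (η Z + 1)).and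
    (hbdd.and eventually_mem_nhdsWithin)).exists
  have hZle : ∀ z ≥ y, Z ≤ z := fun z hz => (le_of_lt hZy).trans hz
  have hshift : ∀ z ≥ y, 0 < z + -Z := fun z hz => by linarith [mem_Ioi.1 hZy]
  refine ⟨-Z, (eventually_ge_atTop y).mono ?_⟩
  refine le_on_Ici_of_second_deriv_lt
    (HasDerivAt.continuousOn fun z hz => (hZ z (hZle z hz)).2.2.1)
    (HasDerivAt.continuousOn fun z hz =>
      (hasDerivAt_const_mul_rpow_neg _ _ (hshift z hz)).comp_add_const z (-Z))
    (fun z hz => (hZ z (hZle z hz.le)).2.2.1) (fun z hz => (hZ z (hZle z hz.le)).2.2.2)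
    (fun z hz => (hasDerivAt_const_mul_rpow_neg _ _ (hshift z hz.le)).comp_add_const z (-Z))
    (fun z hz => (hasDerivAt_powerSolution_deriv hn hc (hshift z hz.le)).comp_add_const z (-Z))
    h.vanishesWithDerivs.tendsto_zero (tendsto_powerSolution_add_const hn c (-Z))
    (hηy.le.trans hy) fun z hz hlt => ?_
  have hshift_pos := hshift z hz.le
  have hw := powerSolution_pos hn hc hshift_pos
  obtain ⟨hz0, hη, -⟩ := hZ z (hZle z hz.le)
  refine pow_lt_pow_left₀ ?_ (by positivity) (by lia)
  calc c * (z + -Z) * powerSolution n c (z + -Z) ≤ c * z * powerSolution n c (z + -Z) := by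
        gcongr
        linarith [(hZ Z le_rfl).1]
    _ ≤ c * z * η z := by gcongr
    _ < c * z * η z + η z ^ 2 := lt_add_of_pos_right _ (by positivity)

theorem exists_powerSolution_le (h : IsReactiveTail n c η η') (hn : 2 ≤ n) (hc : 0 < c) :
    ∃ s, ∀ᶠ z in atTop, powerSolution n c (z + s) ≤ η z := by
  obtain ⟨Z, hZ⟩ := eventually_atTop.1 ((eventually_ge_atTop 0).and (h.pos.and
    (h.vanishesWithDerivs.hasDerivAt.and (h.vanishesWithDerivs.hasDerivAt_deriv.and
      (h.vanishesWithDerivs.tendsto_zero.eventually_le_const hc)))))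
  obtain ⟨s, hstart, hs⟩ := (((tendsto_powerSolution_add_const hn c Z).eventually_le_const
    (hZ Z le_rfl).2.1).and (eventually_ge_atTop 1)).exists
  have hshift : ∀ z ≥ Z, 0 < z + s := fun z hz => by linarith [(hZ z hz).1]
  refine ⟨s, (eventually_ge_atTop Z).mono ?_⟩
  refine le_on_Ici_of_second_deriv_lt
    (HasDerivAt.continuousOn fun z hz =>
      (hasDerivAt_const_mul_rpow_neg _ _ (hshift z hz)).comp_add_const z s)
    (HasDerivAt.continuousOn fun z hz => (hZ z hz).2.2.1)
    (fun z hz => (hasDerivAt_const_mul_rpow_neg _ _ (hshift z hz.le)).comp_add_const z s)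
    (fun z hz => (hasDerivAt_powerSolution_deriv hn hc (hshift z hz.le)).comp_add_const z s)
    (fun z hz => (hZ z hz.le).2.2.1) (fun z hz => (hZ z hz.le).2.2.2.1)
    (tendsto_powerSolution_add_const hn c s) h.vanishesWithDerivs.tendsto_zero
    (by rwa [add_comm Z s]) fun z hz hlt => ?_
  obtain ⟨hz0, hη, -, -, hηc⟩ := hZ z hz.le
  refine pow_lt_pow_left₀ ?_ (by positivity) (by lia)
  calc c * z * η z + η z ^ 2 = (c * z + η z) * η z := by ring
    _ ≤ (c * z + c * s) * η z := by
        gcongr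
        exact hηc.trans (le_mul_of_one_le_right hc.le hs)
    _ = c * (z + s) * η z := by ring
    _ < c * (z + s) * powerSolution n c (z + s) := by gcongr

theorem isBigO_sub_powerSolution (h : IsReactiveTail n c η η') (hn : 2 ≤ n) (hc : 0 < c) :
    (fun z => η z - powerSolution n c z) =O[atTop] fun z => z ^ (-(del n + 1)) := by
  obtain ⟨s, hs⟩ := h.exists_powerSolution_le hn hc
  obtain ⟨t, ht⟩ := h.exists_le_powerSolution hn hc
  refine (IsBigO.of_norm_eventuallyLE ?_).trans
    ((isBigO_powerSolution_add_const_sub n c s).norm_left.add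
      (isBigO_powerSolution_add_const_sub n c t).norm_left)
  filter_upwards [hs, ht] with z hlower hupper
  refine (abs_le_max_abs_abs (sub_le_sub_right hlower _) (sub_le_sub_right hupper _)).trans ?_
  exact max_le_add_of_nonneg (abs_nonneg _) (abs_nonneg _)

end IsReactiveTail

section ForcingExpansion

variable {n : ℕ} {c q : ℝ} {η : ℝ → ℝ}

/-- The coefficient of `z ^ (-(2 * del n + 1))` which the quadratic term of the reactive profile
equation contributes as forcing to the equation linearised at `powerSolution n c`. -/
noncomputable def forcingAmplitude (n : ℕ) (c : ℝ) : ℝ :=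
  n * (del n * (del n + 1)) * (powerAmplitude n c ^ 2 / c)

theorem mul_powerSolution_sq_div (n : ℕ) (c : ℝ) {z : ℝ} (hz : 0 < z) :
    n * (del n * (del n + 1)) * (powerSolution n c z ^ 2 / (c * z)) =
      forcingAmplitude n c * z ^ (-(2 * del n + 1)) := by
  have hpow : z ^ (-(2 * del n + 1)) = (z ^ (-del n)) ^ 2 / z := by
    rw [sq, ← Real.rpow_add hz, ← Real.rpow_sub_one hz.ne']
    ring_nf
  rw [hpow, powerSolution, forcingAmplitude]
  ring

theorem isBigO_sub_powerSolution_div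
    (hη : (fun z => η z - powerSolution n c z) =O[atTop] fun z => z ^ (-(del n + q))) :
    (fun z => (η z - powerSolution n c z) / powerSolution n c z) =O[atTop] fun z => z ^ (-q) := by
  have hinv : (fun z : ℝ => (powerSolution n c z)⁻¹) =O[atTop] fun z => z ^ del n := by
    refine ((isBigO_refl (fun z : ℝ => z ^ del n) atTop).const_mul_left
      (powerAmplitude n c)⁻¹).congr' ?_ .rfl
    filter_upwards [eventually_gt_atTop 0] with z hz
    rw [powerSolution, mul_inv, Real.rpow_neg hz.le, inv_inv]
  simpa only [div_eq_mul_inv] using!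
    hη.mul_atTop_rpow_of_isBigO_rpow _ (del n) (-q) hinv (by linarith)

theorem isBigO_powerSolution_div (n : ℕ) (c : ℝ) :
    (fun z => powerSolution n c z / (c * z)) =O[atTop] fun z => z ^ (-(del n + 1)) := by
  refine ((isBigO_refl (fun z : ℝ => z ^ (-(del n + 1))) atTop).const_mul_left
    (powerAmplitude n c / c)).congr' ?_ .rfl
  filter_upwards [eventually_gt_atTop 0] with z hz
  rw [powerSolution, neg_add', Real.rpow_sub_one hz.ne']
  ring

-- With `w` the power solution, `r = (η - w) / w` and `e = w / (c z)`, the right-hand side of the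
-- equation is `(c z w) ^ n * (1 + r + e (1 + r) ^ 2) ^ n`.
theorem forcing_eq_mul_one_add_pow_sub (hn : 2 ≤ n) (hc : 0 < c) {z : ℝ} (hz : 0 < z) (x : ℝ) :
    z ^ 2 * ((c * z * x + x ^ 2) ^ n - del n * (del n + 1) * powerSolution n c z / z ^ 2)
        - n * (del n * (del n + 1)) * (x - powerSolution n c z)
        - forcingAmplitude n c * z ^ (-(2 * del n + 1)) =
      del n * (del n + 1) * powerSolution n c z *
        ((1 + ((x - powerSolution n c z) / powerSolution n c z + powerSolution n c z / (c * z) *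
          (1 + (x - powerSolution n c z) / powerSolution n c z) ^ 2)) ^ n - 1
          - n * ((x - powerSolution n c z) / powerSolution n c z
            + powerSolution n c z / (c * z))) := by
  have hpow := mul_powerSolution_pow hn hc hz
  have hquad := mul_powerSolution_sq_div n c hz
  have hw := (powerSolution_pos hn hc hz).ne'
  set w := powerSolution n c z
  have hfactor : c * z * x + x ^ 2 =
      c * z * w * (1 + ((x - w) / w + w / (c * z) * (1 + (x - w) / w) ^ 2)) := by
    field_simp
    ring
  rw [hfactor, mul_pow, hpow, ← hquad]
  field_simp
  ring

theorem isBigO_forcing_sub (hn : 2 ≤ n) (hc : 0 < c) (hq : 0 < q) (hqδ : q ≤ del n + 1)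
    (hη : (fun z => η z - powerSolution n c z) =O[atTop] fun z => z ^ (-(del n + q))) :
    (fun z => z ^ 2 * ((c * z * η z + η z ^ 2) ^ n
          - del n * (del n + 1) * powerSolution n c z / z ^ 2)
        - n * (del n * (del n + 1)) * (η z - powerSolution n c z)
        - forcingAmplitude n c * z ^ (-(2 * del n + 1))) =O[atTop]
      fun z => z ^ (-(del n + 2 * q)) := by
  have hremainder := isBigO_one_add_pow_sub_linear_add n (isBigO_sub_powerSolution_div hη)
    ((isBigO_powerSolution_div n c).trans (isBigO_rpow_atTop_of_le (neg_le_neg hqδ)))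
    (tendsto_rpow_neg_atTop hq)
  have hsq : (fun z : ℝ => (z ^ (-q)) ^ 2) =ᶠ[atTop] fun z => z ^ (-(2 * q)) := by
    filter_upwards [eventually_ge_atTop 0] with z hz
    rw [← Real.rpow_mul_natCast hz]
    ring_nf
  have hw : (fun z => del n * (del n + 1) * powerSolution n c z) =O[atTop]
      fun z => z ^ (-del n) :=
    ((isBigO_refl _ _).const_mul_left (powerAmplitude n c)).const_mul_left _
  refine (hw.mul_atTop_rpow_of_isBigO_rpow (-del n) (-(2 * q)) (-(del n + 2 * q))
    (hremainder.trans_eventuallyEq hsq) (by linarith)).congr' ?_ .rfl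
  filter_upwards [eventually_gt_atTop 0] with z hz
  exact (forcing_eq_mul_one_add_pow_sub hn hc hz (η z)).symm

end ForcingExpansion

section PerturbationExponent

variable {n : ℕ} {x : ℝ}

/-- The positive `p` for which `z ^ (-p)` solves the equation `z ^ 2 * v'' = n * δ * (δ + 1) * v`,
the linearisation of `w'' = (c z w) ^ n` at `powerSolution n c`. -/
noncomputable def perturbationExponent (n : ℕ) : ℝ :=
  (√(4 * n * del n * (del n + 1) + 1) - 1) / 2

theorem perturbationExponent_mul_add_one (hn : 2 ≤ n) :
    perturbationExponent n * (perturbationExponent n + 1) = n * (del n * (del n + 1)) := by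
  have : 0 < del n := one_pos.trans (one_lt_del hn)
  have hsqrt : √(4 * n * del n * (del n + 1) + 1) ^ 2 = 4 * n * del n * (del n + 1) + 1 :=
    Real.sq_sqrt (by positivity)
  unfold perturbationExponent
  linear_combination hsqrt / 4

theorem lt_perturbationExponent (h : x * (x + 1) < n * (del n * (del n + 1))) :
    x < perturbationExponent n := by
  have hsqrt : 2 * x + 1 < √(4 * n * del n * (del n + 1) + 1) :=
    Real.lt_sqrt_of_sq_lt (by linarith)
  unfold perturbationExponent
  linarith

theorem perturbationExponent_lt (hx : 0 ≤ x) (h : n * (del n * (del n + 1)) < x * (x + 1)) :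
    perturbationExponent n < x := by
  have hsqrt : √(4 * n * del n * (del n + 1) + 1) < 2 * x + 1 :=
    (Real.sqrt_lt' (by linarith)).2 (by linarith)
  unfold perturbationExponent
  linarith

theorem natCast_mul_del_mul_add_one (hn : 2 ≤ n) :
    (n : ℝ) * (del n * (del n + 1)) = (del n + 1) * (n + 2 + del n) := by
  linear_combination (del n + 1) * natCast_mul_del hn

theorem del_add_three_halves_lt_perturbationExponent (hn : 2 ≤ n) :
    del n + 3 / 2 < perturbationExponent n := by
  have hn' : (2 : ℝ) ≤ n := by exact_mod_cast hn
  refine lt_perturbationExponent ?_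
  rw [natCast_mul_del_mul_add_one hn]
  linarith [natCast_mul_del hn]

theorem perturbationExponent_lt_of_le_five (hn : 2 ≤ n) (hn5 : n ≤ 5) :
    perturbationExponent n < min (del n + 3) (2 * del n + 1) := by
  have hδ := one_lt_del hn
  refine lt_min (perturbationExponent_lt (by linarith) ?_)
    (perturbationExponent_lt (by linarith) ?_) <;>
  · interval_cases n <;> norm_num [del]

theorem del_le_of_six_le (hn : 6 ≤ n) : del n ≤ 8 / 5 := by
  have hn' : (6 : ℝ) ≤ n := by exact_mod_cast hn
  rw [del, div_le_div_iff₀ (by linarith) (by norm_num)]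
  linarith

theorem two_mul_del_add_one_lt_perturbationExponent (hn : 6 ≤ n) :
    2 * del n + 1 < perturbationExponent n := by
  have hn' : (6 : ℝ) ≤ n := by exact_mod_cast hn
  have hδ := one_lt_del (by lia : 2 ≤ n)
  have hδ' := del_le_of_six_le hn
  refine lt_perturbationExponent ?_
  rw [natCast_mul_del_mul_add_one (by lia)]
  calc (2 * del n + 1) * (2 * del n + 1 + 1) = (del n + 1) * (4 * del n + 2) := by ring
    _ < (del n + 1) * (n + 2 + del n) := by
      gcongr ?_ * ?_
      linarith

end PerturbationExponent

theorem kap_pos : 0 < kap := by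
  unfold kap
  positivity

namespace IsReactiveTail

variable {n : ℕ} {c : ℝ} {η η' : ℝ → ℝ}

theorem vanishesWithDerivs_sub_powerSolution (h : IsReactiveTail n c η η') (hn : 2 ≤ n) :
    VanishesWithDerivs (fun z => η z - powerSolution n c z)
      (fun z => η' z - -(powerAmplitude n c * del n) * z ^ (-del n - 1))
      (fun z => (c * z * η z + η z ^ 2) ^ n
        - del n * (del n + 1) * powerSolution n c z / z ^ 2) :=
  h.vanishesWithDerivs.sub
    (vanishesWithDerivs_const_mul_rpow_neg _ (one_pos.trans (one_lt_del hn)))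

theorem isBigO_sub_powerSolution_three_halves (h : IsReactiveTail n c η η') (hn : 2 ≤ n)
    (hc : 0 < c) :
    (fun z => η z - powerSolution n c z) =O[atTop] fun z => z ^ (-(del n + 3 / 2)) := by
  have hδ := one_lt_del hn
  refine (h.vanishesWithDerivs_sub_powerSolution hn).isBigO_of_euler_isBigO (by linarith)
    (del_add_three_halves_lt_perturbationExponent hn) ?_
  rw [perturbationExponent_mul_add_one hn]
  exact isBigO_rpow_neg_of_sub_isBigO (by linarith) (by linarith)
    (isBigO_forcing_sub hn hc one_pos (by linarith) (h.isBigO_sub_powerSolution hn hc))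

theorem isBigO_euler_sub (h : IsReactiveTail n c η η') (hn : 2 ≤ n) (hc : 0 < c) :
    (fun z => z ^ 2 * ((c * z * η z + η z ^ 2) ^ n
          - del n * (del n + 1) * powerSolution n c z / z ^ 2)
        - perturbationExponent n * (perturbationExponent n + 1) * (η z - powerSolution n c z)
        - forcingAmplitude n c * z ^ (-(2 * del n + 1))) =O[atTop]
      fun z => z ^ (-(del n + 3)) := by
  have hδ := one_lt_del hn
  have hforce := isBigO_forcing_sub hn hc (by norm_num) (by linarith)
    (h.isBigO_sub_powerSolution_three_halves hn hc)
  rw [perturbationExponent_mul_add_one hn]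
  convert hforce using 4
  norm_num

theorem exists_tendsto_rpow_mul_sub_of_le_five (h : IsReactiveTail n c η η') (hn : 2 ≤ n)
    (hn5 : n ≤ 5) (hc : 0 < c) :
    ∃ l, Tendsto (fun z => z ^ perturbationExponent n * (η z - powerSolution n c z))
      atTop (𝓝 l) := by
  have hp : 0 < perturbationExponent n := by
    linarith [one_lt_del hn, del_add_three_halves_lt_perturbationExponent hn]
  exact (h.vanishesWithDerivs_sub_powerSolution hn).exists_tendsto_rpow_mul_of_euler_isBigO hp
    (perturbationExponent_lt_of_le_five hn hn5)
    (isBigO_rpow_neg_of_sub_isBigO (min_le_right _ _) (min_le_left _ _)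
      (h.isBigO_euler_sub hn hc))

theorem tendsto_rpow_mul_sub_of_six_le (h : IsReactiveTail n c η η') (hn : 6 ≤ n) (hc : 0 < c) :
    Tendsto (fun z => z ^ (2 * del n + 1) * (η z - powerSolution n c z)) atTop
      (𝓝 (forcingAmplitude n c / ((2 * del n + 1) * (2 * del n + 1 + 1)
        - perturbationExponent n * (perturbationExponent n + 1)))) := by
  have hn2 : 2 ≤ n := by lia
  have hδ := one_lt_del hn2
  exact (h.vanishesWithDerivs_sub_powerSolution hn2).tendsto_rpow_mul_of_euler_sub_isBigO
    (by linarith) (two_mul_del_add_one_lt_perturbationExponent hn)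
    (by linarith [del_le_of_six_le hn]) (h.isBigO_euler_sub hn2 hc)

end IsReactiveTail

theorem reactive_profile_asymptotics_at_infinity_general {n : ℕ} (hn : 2 ≤ n) {c : ℝ}
    (hc : 0 < c) {η η' : ℝ → ℝ} (h : IsReactiveTail n c η η') :
    Tendsto (fun z => z ^ del n * η z) atTop (𝓝 (powerAmplitude n c)) ∧
    ∃ l, Tendsto (fun z => z ^ delp n * (η z - powerAmplitude n c * z ^ (-del n)))
      atTop (𝓝 l) := by
  refine ⟨tendsto_rpow_mul_of_isBigO (lt_add_one _) (h.isBigO_sub_powerSolution hn hc), ?_⟩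
  rcases le_or_gt n 5 with hn5 | hn6
  · rw [delp, if_pos hn5]
    exact h.exists_tendsto_rpow_mul_sub_of_le_five hn hn5 hc
  · rw [delp, if_neg hn6.not_ge]
    exact ⟨_, h.tendsto_rpow_mul_sub_of_six_le hn6 hc⟩

/-- Asymptotics of the reactive profile at infinity: z^δ η(z) → λ and, for a suitable
constant λ_∞, z^{δ'}(η(z) − λ z^{−δ}) → λ_∞ as z → ∞. -/
theorem reactive_profile_asymptotics_at_infinity (n : ℕ) (hn : 2 ≤ n)
    (η : ℝ → ℝ) (hη : IsReactiveProfile n η) :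
    Filter.Tendsto (fun z : ℝ => z ^ del n * η z) Filter.atTop (nhds (lam n)) ∧
    ∃ lamInf : ℝ,
      Filter.Tendsto (fun z : ℝ => z ^ delp n * (η z - lam n * z ^ (-(del n))))
        Filter.atTop (nhds lamInf) :=
  reactive_profile_asymptotics_at_infinity_general hn (mul_pos two_pos kap_pos) hη.isReactiveTail
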